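/- Suppose U satisfies the quasi-diagonalization property: c Σ_{γ∈Γ} 2^{−2b j(γ)} |x_γ|² ≤ ‖UΦ*x‖²_H ≤ C Σ_{γ∈Γ} 2^{−2b j(γ)} |x_γ|² for all x ∈ ℓ²(Γ), for some constants c, C > 0 and b ≥ 0. Suppose the orthogonal projection P satisfies the balancing property: ‖P^⊥ U Φ* x‖²_H ≤ θ² 2^{−2b j₀} ‖x‖₂² for every x ∈ ℓ²(Γ) supported in Λ_{≤j₀}, where P^⊥ := I − P and θ² ≤ c/2. Then F := P ∘ U satisfies the weak quasi-diagonalization property: ‖FΦ*x‖²_H ≤ C Σ_{γ∈Γ} 2^{−2b j(γ)} |x_γ|² for all x ∈ ℓ²(Γ), and (c/2) Σ_{γ∈Λ_{≤j₀}} 2^{−2b j(γ)} |x_γ|² ≤ ‖FΦ*x‖²_H for all x ∈ ℓ²(Γ) supported in Λ_{≤j₀}. -/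

import Mathlib

/-! Since `P` is an orthogonal projection, Pythagoras gives
`‖U u‖² = ‖P (U u)‖² + ‖U u - P (U u)‖²` (`norm_sq_eq_add_of_proj`). The upper bound follows by
dropping the last term. For the lower bound, Parseval and the monotonicity of `t ↦ 2 ^ (-2bt)` give
`2 ^ (-2b j₀) ‖u‖² ≤ ∑ 2 ^ (-2b j(γ)) |x_γ|²` for `u` supported in scales `≤ j₀`
(`scale_mul_norm_sq_le_tsum`), so the balancing property bounds `‖U u - P (U u)‖²` by `c / 2` times
the weighted sum, which is then absorbed by the lower bound on `‖U u‖²`. -/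

lemma norm_sq_eq_add_of_proj {H : Type*}
    [NormedAddCommGroup H] [InnerProductSpace ℂ H] [CompleteSpace H] (P : H →L[ℂ] H)
    (hP_idem : P.comp P = P) (hP_selfadj : IsSelfAdjoint P) (v : H) :
    ‖v‖ ^ 2 = ‖P v‖ ^ 2 + ‖v - P v‖ ^ 2 := by
  have hPP : P (P v) = P v := DFunLike.congr_fun hP_idem v
  have horth : inner ℂ (P v) (v - P v) = 0 := by
    have h : inner ℂ (P v) (v - P v) = inner ℂ v (P (v - P v)) :=
      hP_selfadj.isSymmetric v (v - P v)
    rw [h, map_sub, hPP, sub_self, inner_zero_right]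
  have h := norm_add_sq_eq_norm_sq_add_norm_sq_of_inner_eq_zero (P v) (v - P v) horth
  rw [add_sub_cancel] at h
  simpa [sq] using h

/-- The weight at scale `j₀` is the smallest one occurring in a signal supported in scales
`≤ j₀`, so the weighted energy dominates that weight times the plain energy. Finiteness of the
set of such indices makes the weighted series summable. -/
lemma scale_mul_norm_sq_le_tsum {Γ : Type*} (jdx : Γ → ℕ)
    (hfin : ∀ n : ℕ, {γ : Γ | jdx γ ≤ n}.Finite) {H₁ : Type*}
    [NormedAddCommGroup H₁] [InnerProductSpace ℂ H₁]
    (φ : HilbertBasis Γ ℂ H₁) (j₀ : ℕ) {b : ℝ} (hb : 0 ≤ b) (u : H₁)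
    (hu : ∀ γ, j₀ < jdx γ → φ.repr u γ = 0) :
    (2:ℝ) ^ (-(2 * b * (j₀ : ℝ))) * ‖u‖ ^ 2 ≤
      ∑' γ, (2:ℝ) ^ (-(2 * b * (jdx γ : ℝ))) * ‖φ.repr u γ‖ ^ 2 := by
  have hparseval : HasSum (fun γ => ‖φ.repr u γ‖ ^ 2) (‖u‖ ^ 2) := by
    simpa using lp.hasSum_norm (p := 2) (by simp) (φ.repr u)
  have hsummable : Summable
      (fun γ => (2:ℝ) ^ (-(2 * b * (jdx γ : ℝ))) * ‖φ.repr u γ‖ ^ 2) := by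
    refine summable_of_hasFiniteSupport ((hfin j₀).subset fun γ hγ => ?_)
    by_contra hlt
    exact hγ (by simp [hu γ (not_le.mp hlt)])
  refine hasSum_le (fun γ => ?_) (hparseval.mul_left _) hsummable.hasSum
  rcases lt_or_ge j₀ (jdx γ) with hlt | hle
  · simp [hu γ hlt]
  · gcongr
    norm_num


/-- If `U` satisfies the quasi-diagonalization property and the orthogonal
projection `P` satisfies the balancing property with `θ² ≤ c/2`, then `F = P ∘ U` satisfies the
weak quasi-diagonalization property. Signals `x ∈ ℓ²(Γ)` are identified with elements
`u = Φ*x ∈ H₁` via the orthonormal basis `φ`, so that `x_γ = (φ.repr u) γ`;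
"supported in `Λ_{≤j₀}`" means that all coefficients at scales `> j₀` vanish. -/
theorem statement_2
    {Γ : Type*} (jdx : Γ → ℕ)
    (hfin : ∀ n : ℕ, {γ : Γ | jdx γ ≤ n}.Finite)
    {H₁ H : Type*}
    [NormedAddCommGroup H₁] [InnerProductSpace ℂ H₁] [CompleteSpace H₁]
    [NormedAddCommGroup H] [InnerProductSpace ℂ H] [CompleteSpace H]
    (φ : HilbertBasis Γ ℂ H₁)
    (U : H₁ →L[ℂ] H) (P : H →L[ℂ] H)
    (hP_idem : P.comp P = P) (hP_selfadj : IsSelfAdjoint P)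
    (j₀ : ℕ) (b c C θ : ℝ) (hb : 0 ≤ b) (hc : 0 < c) (hC : 0 < C)
    (hquasi : ∀ u : H₁,
      c * ∑' γ, (2:ℝ) ^ (-(2 * b * (jdx γ : ℝ))) * ‖φ.repr u γ‖ ^ 2 ≤ ‖U u‖ ^ 2 ∧
      ‖U u‖ ^ 2 ≤ C * ∑' γ, (2:ℝ) ^ (-(2 * b * (jdx γ : ℝ))) * ‖φ.repr u γ‖ ^ 2)
    (hθ : θ ^ 2 ≤ c / 2)
    (hbal : ∀ u : H₁, (∀ γ, j₀ < jdx γ → φ.repr u γ = 0) →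
      ‖U u - P (U u)‖ ^ 2 ≤ θ ^ 2 * (2:ℝ) ^ (-(2 * b * (j₀ : ℝ))) * ‖u‖ ^ 2) :
    (∀ u : H₁,
      ‖P (U u)‖ ^ 2 ≤ C * ∑' γ, (2:ℝ) ^ (-(2 * b * (jdx γ : ℝ))) * ‖φ.repr u γ‖ ^ 2) ∧
    (∀ u : H₁, (∀ γ, j₀ < jdx γ → φ.repr u γ = 0) →
      (c / 2) * ∑' γ, (2:ℝ) ^ (-(2 * b * (jdx γ : ℝ))) * ‖φ.repr u γ‖ ^ 2 ≤ ‖P (U u)‖ ^ 2) := by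
  have hpyth := norm_sq_eq_add_of_proj P hP_idem hP_selfadj
  refine ⟨fun u => ?_, fun u hu => ?_⟩
  · linarith [(hquasi u).2, hpyth (U u), sq_nonneg ‖U u - P (U u)‖]
  · have hscale := scale_mul_norm_sq_le_tsum jdx hfin φ j₀ hb u hu
    have hlow := (hquasi u).1
    have herr := hbal u hu
    set S := ∑' γ, (2:ℝ) ^ (-(2 * b * (jdx γ : ℝ))) * ‖φ.repr u γ‖ ^ 2
    have hres : ‖U u - P (U u)‖ ^ 2 ≤ c / 2 * S := by
      rw [mul_assoc] at herr
      exact herr.trans (mul_le_mul hθ hscale (by positivity) (by positivity))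
    linarith [hpyth (U u)]
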